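/- Let 𝒜 be a weakly idempotent complete exact category and (𝒳,𝒴) a hereditary complete cotorsion pair in 𝒜 with ω = 𝒳∩𝒴. Suppose α = p∘i ∈ Weq_ω where i ∈ CoFib_ω (an inflation with cokernel in 𝒳) and p ∈ TFib_ω (a deflation with kernel in 𝒴). Then i ∈ TCoFib_ω, i.e. i is a split monomorphism with cokernel in ω. -/

import Mathlib

open CategoryTheory Limits ZeroObject

universe v u

/-- An exact structure (Quillen exact category) on an additive category `𝒜`:
a class of conflations (kernel-cokernel pairs), closed under isomorphisms,
with identities deflations, deflations closed under composition and stable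
under pullback, and inflations stable under pushout. -/
structure ExactStructure (𝒜 : Type u) [Category.{v} 𝒜] [Preadditive 𝒜]
    [HasZeroObject 𝒜] [HasBinaryBiproducts 𝒜] : Type (max u v) where
  conflation : ∀ ⦃X Y Z : 𝒜⦄, (X ⟶ Y) → (Y ⟶ Z) → Prop
  comp_zero : ∀ {X Y Z : 𝒜} {i : X ⟶ Y} {d : Y ⟶ Z}, conflation i d → i ≫ d = 0
  isKernel : ∀ {X Y Z : 𝒜} {i : X ⟶ Y} {d : Y ⟶ Z} (h : conflation i d),
    Nonempty (IsLimit (KernelFork.ofι i (comp_zero h)))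
  isCokernel : ∀ {X Y Z : 𝒜} {i : X ⟶ Y} {d : Y ⟶ Z} (h : conflation i d),
    Nonempty (IsColimit (CokernelCofork.ofπ d (comp_zero h)))
  conflation_iso : ∀ {X Y Z X' Y' Z' : 𝒜} {i : X ⟶ Y} {d : Y ⟶ Z}
    (eX : X ≅ X') (eY : Y ≅ Y') (eZ : Z ≅ Z') {i' : X' ⟶ Y'} {d' : Y' ⟶ Z'},
    conflation i d → i ≫ eY.hom = eX.hom ≫ i' → d ≫ eZ.hom = eY.hom ≫ d' →
    conflation i' d'
  id_deflation : ∀ X : 𝒜, conflation (0 : (0 : 𝒜) ⟶ X) (𝟙 X)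
  deflation_comp : ∀ {X Y Z X' W : 𝒜} {i : X ⟶ Y} {d : Y ⟶ Z} {i' : X' ⟶ Z} {d' : Z ⟶ W},
    conflation i d → conflation i' d' → ∃ (K : 𝒜) (k : K ⟶ Y), conflation k (d ≫ d')
  pullback_deflation : ∀ {X Y Z Z' : 𝒜} {i : X ⟶ Y} {d : Y ⟶ Z},
    conflation i d → ∀ (f : Z' ⟶ Z),
    ∃ (Y' : 𝒜) (f' : Y' ⟶ Y) (d' : Y' ⟶ Z') (K : 𝒜) (k : K ⟶ Y'),
      IsPullback f' d' d f ∧ conflation k d'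
  pushout_inflation : ∀ {X Y Z X' : 𝒜} {i : X ⟶ Y} {d : Y ⟶ Z},
    conflation i d → ∀ (f : X ⟶ X'),
    ∃ (Y' : 𝒜) (f' : Y ⟶ Y') (i' : X' ⟶ Y') (Q : 𝒜) (q : Y' ⟶ Q),
      IsPushout i f f' i' ∧ conflation i' q

variable {𝒜 : Type u} [Category.{v} 𝒜] [Preadditive 𝒜] [HasZeroObject 𝒜]
  [HasBinaryBiproducts 𝒜]

/-- `f` is an inflation: the first map of some conflation. -/
def IsInflation (E : ExactStructure 𝒜) {X Y : 𝒜} (i : X ⟶ Y) : Prop :=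
  ∃ (Z : 𝒜) (d : Y ⟶ Z), E.conflation i d

/-- `f` is a deflation: the second map of some conflation. -/
def IsDeflation (E : ExactStructure 𝒜) {Y Z : 𝒜} (d : Y ⟶ Z) : Prop :=
  ∃ (X : 𝒜) (i : X ⟶ Y), E.conflation i d

/-- `𝒜` is weakly idempotent complete: every split epimorphism is a deflation. -/
def IsWIC (E : ExactStructure 𝒜) : Prop :=
  ∀ {X Y : 𝒜} (d : X ⟶ Y) (s : Y ⟶ X), s ≫ d = 𝟙 Y → IsDeflation E d

/-- `Ext¹(A,B) = 0`: every conflation `B ⟶ M ⟶ A` splits. -/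
def Ext1IsZero (E : ExactStructure 𝒜) (A B : 𝒜) : Prop :=
  ∀ {M : 𝒜} (i : B ⟶ M) (d : M ⟶ A), E.conflation i d → ∃ r : M ⟶ B, i ≫ r = 𝟙 B

/-- `(X, Y)` is a cotorsion pair: each class is the `Ext¹`-orthogonal of the other. -/
def IsCotorsionPair (E : ExactStructure 𝒜) (X Y : Set 𝒜) : Prop :=
  (∀ A : 𝒜, A ∈ X ↔ ∀ B ∈ Y, Ext1IsZero E A B) ∧
  (∀ B : 𝒜, B ∈ Y ↔ ∀ A ∈ X, Ext1IsZero E A B)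

/-- Completeness of a cotorsion pair: every object has approximation sequences. -/
def IsCompleteCP (E : ExactStructure 𝒜) (X Y : Set 𝒜) : Prop :=
  ∀ A : 𝒜,
    (∃ (Y₀ X₀ : 𝒜) (i : Y₀ ⟶ X₀) (d : X₀ ⟶ A), E.conflation i d ∧ X₀ ∈ X ∧ Y₀ ∈ Y) ∧
    (∃ (Y₁ X₁ : 𝒜) (i : A ⟶ Y₁) (d : Y₁ ⟶ X₁), E.conflation i d ∧ X₁ ∈ X ∧ Y₁ ∈ Y)

/-- Heredity of a cotorsion pair: `X` is closed under kernels of deflations and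
`Y` is closed under cokernels of inflations. -/
def IsHereditaryCP (E : ExactStructure 𝒜) (X Y : Set 𝒜) : Prop :=
  (∀ {K A B : 𝒜} (i : K ⟶ A) (d : A ⟶ B), E.conflation i d → A ∈ X → B ∈ X → K ∈ X) ∧
  (∀ {K A B : 𝒜} (i : K ⟶ A) (d : A ⟶ B), E.conflation i d → K ∈ Y → A ∈ Y → B ∈ Y)

/-- `t : W ⟶ B` is a right `ω`-approximation of `B`. -/
def IsRightApprox (ω : Set 𝒜) {W B : 𝒜} (t : W ⟶ B) : Prop :=
  W ∈ ω ∧ ∀ (W' : 𝒜), W' ∈ ω → ∀ g : W' ⟶ B, ∃ h : W' ⟶ W, h ≫ t = g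

/-- `ω` is contravariantly finite: every object has a right `ω`-approximation. -/
def IsContravariantlyFinite (ω : Set 𝒜) : Prop :=
  ∀ B : 𝒜, ∃ (W : 𝒜) (t : W ⟶ B), IsRightApprox ω t

/-- A full additive subcategory closed under isomorphisms and direct summands,
viewed as a class of objects. -/
def AdditivelyClosed (S : Set 𝒜) : Prop :=
  (0 : 𝒜) ∈ S ∧ (∀ A B : 𝒜, A ∈ S → B ∈ S → (A ⊞ B) ∈ S) ∧
  (∀ {A B : 𝒜}, (A ≅ B) → A ∈ S → B ∈ S) ∧
  (∀ {A B : 𝒜} (i : A ⟶ B) (r : B ⟶ A), i ≫ r = 𝟙 A → B ∈ S → A ∈ S)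

/-- `CoFib_ω`: inflations with cokernel in `X`. -/
def CoFibO (E : ExactStructure 𝒜) (X : Set 𝒜) : MorphismProperty 𝒜 :=
  fun _ B f => ∃ (Z : 𝒜) (d : B ⟶ Z), E.conflation f d ∧ Z ∈ X

/-- `Fib_ω`: the `ω`-epic morphisms. -/
def FibO (ω : Set 𝒜) : MorphismProperty 𝒜 :=
  fun A B f => ∀ (W : 𝒜), W ∈ ω → ∀ g : W ⟶ B, ∃ h : W ⟶ A, h ≫ f = g

/-- `Weq_ω`: morphisms `f : A ⟶ B` such that for some `W ∈ ω` and `t : W ⟶ B`,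
`(f,t) : A ⊞ W ⟶ B` is a deflation with kernel in `Y`. -/
def WeqO (E : ExactStructure 𝒜) (ω Y : Set 𝒜) : MorphismProperty 𝒜 :=
  fun A B f => ∃ (W : 𝒜) (_ : W ∈ ω) (t : W ⟶ B) (K : 𝒜) (k : K ⟶ A ⊞ W),
    E.conflation k (biprod.desc f t) ∧ K ∈ Y

/-- `TCoFib_ω`: split monomorphisms with cokernel in `ω`. -/
def TCoFibO (E : ExactStructure 𝒜) (ω : Set 𝒜) : MorphismProperty 𝒜 :=
  fun A B f => (∃ r : B ⟶ A, f ≫ r = 𝟙 A) ∧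
    ∃ (Z : 𝒜) (d : B ⟶ Z), E.conflation f d ∧ Z ∈ ω

/-- `TFib_ω`: deflations with kernel in `Y`. -/
def TFibO (E : ExactStructure 𝒜) (Y : Set 𝒜) : MorphismProperty 𝒜 :=
  fun A _ f => ∃ (K : 𝒜) (k : K ⟶ A), E.conflation k f ∧ K ∈ Y

/-- `g` is a retract of `f`. -/
def IsRetractMor {A' B' A B : 𝒜} (g : A' ⟶ B') (f : A ⟶ B) : Prop :=
  ∃ (φ₁ : A' ⟶ A) (ψ₁ : A ⟶ A') (φ₂ : B' ⟶ B) (ψ₂ : B ⟶ B'),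
    φ₁ ≫ ψ₁ = 𝟙 A' ∧ φ₂ ≫ ψ₂ = 𝟙 B' ∧ φ₁ ≫ f = g ≫ φ₂ ∧ f ≫ ψ₂ = ψ₁ ≫ g

/-- A (closed, Quillen) model structure, given by classes of cofibrations,
fibrations and weak equivalences. -/
structure IsModelStructure (C F W : MorphismProperty 𝒜) : Prop where
  weq_comp : ∀ {X Y Z : 𝒜} (f : X ⟶ Y) (g : Y ⟶ Z), W f → W g → W (f ≫ g)
  weq_cancel_left : ∀ {X Y Z : 𝒜} (f : X ⟶ Y) (g : Y ⟶ Z), W f → W (f ≫ g) → W g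
  weq_cancel_right : ∀ {X Y Z : 𝒜} (f : X ⟶ Y) (g : Y ⟶ Z), W g → W (f ≫ g) → W f
  retract_cofib : ∀ {A' B' A B : 𝒜} (g : A' ⟶ B') (f : A ⟶ B),
    IsRetractMor g f → C f → C g
  retract_fib : ∀ {A' B' A B : 𝒜} (g : A' ⟶ B') (f : A ⟶ B),
    IsRetractMor g f → F f → F g
  retract_weq : ∀ {A' B' A B : 𝒜} (g : A' ⟶ B') (f : A ⟶ B),
    IsRetractMor g f → W f → W g
  lifting_left : ∀ {A B X Y : 𝒜} (i : A ⟶ B) (p : X ⟶ Y) (a : A ⟶ X) (b : B ⟶ Y),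
    C i → W i → F p → a ≫ p = i ≫ b → ∃ s : B ⟶ X, i ≫ s = a ∧ s ≫ p = b
  lifting_right : ∀ {A B X Y : 𝒜} (i : A ⟶ B) (p : X ⟶ Y) (a : A ⟶ X) (b : B ⟶ Y),
    C i → F p → W p → a ≫ p = i ≫ b → ∃ s : B ⟶ X, i ≫ s = a ∧ s ≫ p = b
  fact_left : ∀ {A B : 𝒜} (f : A ⟶ B), ∃ (Z : 𝒜) (i : A ⟶ Z) (p : Z ⟶ B),
    i ≫ p = f ∧ C i ∧ W i ∧ F p
  fact_right : ∀ {A B : 𝒜} (f : A ⟶ B), ∃ (Z : 𝒜) (j : A ⟶ Z) (q : Z ⟶ B),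
    j ≫ q = f ∧ C j ∧ F q ∧ W q

/-- An object is cofibrant if `0 ⟶ X` is a cofibration. -/
def Cofibrant (C : MorphismProperty 𝒜) (A : 𝒜) : Prop := C (0 : (0 : 𝒜) ⟶ A)

/-- An object is fibrant if `X ⟶ 0` is a fibration. -/
def Fibrant (F : MorphismProperty 𝒜) (A : 𝒜) : Prop := F (0 : A ⟶ (0 : 𝒜))

/-- An object is trivial if `0 ⟶ X` is a weak equivalence. -/
def TrivialObj (W : MorphismProperty 𝒜) (A : 𝒜) : Prop := W (0 : (0 : 𝒜) ⟶ A)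

/-- `P` is projective in the exact category. -/
def IsProjObj (E : ExactStructure 𝒜) (P : 𝒜) : Prop :=
  ∀ {A B : 𝒜} (d : A ⟶ B), IsDeflation E d → ∀ g : P ⟶ B, ∃ h : P ⟶ A, h ≫ d = g

/-- The exact category has enough projective objects. -/
def HasEnoughProj (E : ExactStructure 𝒜) : Prop :=
  ∀ X : 𝒜, ∃ (P : 𝒜) (d : P ⟶ X), IsProjObj E P ∧ IsDeflation E d

/-- Cofibrations are exactly the inflations with cofibrant cokernel. -/
def CofibsAreInflWithCofibCoker (E : ExactStructure 𝒜) (C : MorphismProperty 𝒜) : Prop :=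
  ∀ {A B : 𝒜} (f : A ⟶ B),
    C f ↔ ∃ (Z : 𝒜) (d : B ⟶ Z), E.conflation f d ∧ Cofibrant C Z

/-- Fibrations are exactly the deflations with fibrant kernel. -/
def FibsAreDeflWithFibKer (E : ExactStructure 𝒜) (F : MorphismProperty 𝒜) : Prop :=
  ∀ {A B : 𝒜} (f : A ⟶ B),
    F f ↔ ∃ (K : 𝒜) (k : K ⟶ A), E.conflation k f ∧ Fibrant F K

/-- Trivial fibrations are exactly the deflations with trivially fibrant kernel. -/
def TrivFibsAreDeflWithTrivFibKer (E : ExactStructure 𝒜)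
    (F W : MorphismProperty 𝒜) : Prop :=
  ∀ {A B : 𝒜} (f : A ⟶ B),
    (F f ∧ W f) ↔ ∃ (K : 𝒜) (k : K ⟶ A), E.conflation k f ∧ Fibrant F K ∧ TrivialObj W K

/-- Every cofibration is an inflation. -/
def CofibsAreInfl (E : ExactStructure 𝒜) (C : MorphismProperty 𝒜) : Prop :=
  ∀ {A B : 𝒜} (f : A ⟶ B), C f → IsInflation E f

/-- Every trivial fibration is a deflation. -/
def TrivFibsAreDefl (E : ExactStructure 𝒜) (F W : MorphismProperty 𝒜) : Prop :=
  ∀ {A B : 𝒜} (f : A ⟶ B), F f → W f → IsDeflation E f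

/-- An exact model structure in the sense of Gillespie. -/
def IsExactModelStr (E : ExactStructure 𝒜) (C F W : MorphismProperty 𝒜) : Prop :=
  IsModelStructure C F W ∧ CofibsAreInflWithCofibCoker E C ∧ FibsAreDeflWithFibKer E F

/-- A weakly projective model structure: every object is fibrant, cofibrations are
exactly the inflations with cofibrant cokernel, and trivial fibrations are exactly
the deflations with trivially fibrant kernel. -/
def IsWeaklyProjModelStr (E : ExactStructure 𝒜) (C F W : MorphismProperty 𝒜) : Prop :=
  IsModelStructure C F W ∧ (∀ A : 𝒜, Fibrant F A) ∧
    CofibsAreInflWithCofibCoker E C ∧ TrivFibsAreDeflWithTrivFibKer E F W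

/-- A projective model structure: an exact model structure with every object fibrant. -/
def IsProjectiveModelStr (E : ExactStructure 𝒜) (C F W : MorphismProperty 𝒜) : Prop :=
  IsExactModelStr E C F W ∧ (∀ A : 𝒜, Fibrant F A)

/-- A class of objects is thick: closed under direct summands and two-out-of-three
in conflations. -/
def IsThick (E : ExactStructure 𝒜) (S : Set 𝒜) : Prop :=
  (∀ {A B : 𝒜} (i : A ⟶ B) (r : B ⟶ A), i ≫ r = 𝟙 A → B ∈ S → A ∈ S) ∧
  (∀ {X Y Z : 𝒜} (i : X ⟶ Y) (d : Y ⟶ Z), E.conflation i d →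
    ((X ∈ S → Y ∈ S → Z ∈ S) ∧ (X ∈ S → Z ∈ S → Y ∈ S) ∧ (Y ∈ S → Z ∈ S → X ∈ S)))


/-!
Let `Z` be the cokernel of `i : A ⟶ M`. Lifting `i` against the deflation `(i ≫ p, t) : A ⊞ W ⟶ B`
in the square with top map the inclusion of `A` and bottom map `p` yields a retraction of `i`,
hence a splitting of `A ⟶ M ⟶ Z`. The section `Z ⟶ M` of this splitting and the `W`-component of
the lift then exhibit `Z` as a retract of the pullback of `p` along `t`. This pullback is an
extension of `W` by the kernel of `p`, and right `Ext¹`-orthogonal classes are closed under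
extensions and retracts.
-/

namespace ExactStructure

variable {E : ExactStructure 𝒜} {A B Z K M N : 𝒜} {i : A ⟶ B} {d : B ⟶ Z} {k : K ⟶ M} {p : M ⟶ N}

namespace conflation

theorem exists_lift (h : E.conflation i d) {T : 𝒜} (f : T ⟶ B) (hf : f ≫ d = 0) :
    ∃ g : T ⟶ A, g ≫ i = f :=
  let ⟨g, hg⟩ := KernelFork.IsLimit.lift' (E.isKernel h).some f hf
  ⟨g, hg⟩

theorem exists_desc (h : E.conflation i d) {T : 𝒜} (f : B ⟶ T) (hf : i ≫ f = 0) :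
    ∃ g : Z ⟶ T, d ≫ g = f :=
  let ⟨g, hg⟩ := CokernelCofork.IsColimit.desc' (E.isCokernel h).some f hf
  ⟨g, hg⟩

theorem mono (h : E.conflation i d) : Mono i :=
  mono_of_isLimit_fork (E.isKernel h).some

theorem epi (h : E.conflation i d) : Epi d :=
  epi_of_isColimit_cofork (E.isCokernel h).some

theorem of_isLimit (h : E.conflation i d) {A' : 𝒜} {i' : A' ⟶ B} {w : i' ≫ d = 0}
    (hi' : IsLimit (KernelFork.ofι i' w)) : E.conflation i' d :=
  let e := (E.isKernel h).some.conePointUniqueUpToIso hi'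
  have he : e.hom ≫ i' = i :=
    IsLimit.conePointUniqueUpToIso_hom_comp (E.isKernel h).some hi' WalkingParallelPair.zero
  E.conflation_iso e (Iso.refl B) (Iso.refl Z) h (by simp [he]) (by simp)

theorem of_isColimit (h : E.conflation i d) {Z' : 𝒜} {d' : B ⟶ Z'} {w : i ≫ d' = 0}
    (hd' : IsColimit (CokernelCofork.ofπ d' w)) : E.conflation i d' :=
  let e := (E.isCokernel h).some.coconePointUniqueUpToIso hd'
  have he : d ≫ e.hom = d' :=
    IsColimit.comp_coconePointUniqueUpToIso_hom (E.isCokernel h).some hd' WalkingParallelPair.one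
  E.conflation_iso (Iso.refl A) (Iso.refl B) e h (by simp) (by simp [he])

theorem exists_isPullback (h : E.conflation k p) {N' : 𝒜} (f : N' ⟶ N) :
    ∃ (P : 𝒜) (f' : P ⟶ M) (p' : P ⟶ N') (k' : K ⟶ P),
      IsPullback f' p' p f ∧ E.conflation k' p' ∧ k' ≫ f' = k := by
  obtain ⟨P, f', p', L, l, sq, hl⟩ := E.pullback_deflation h f
  have w : k ≫ p = 0 ≫ f := by rw [E.comp_zero h, zero_comp]
  have : Mono k := h.mono
  have : Mono (sq.lift k 0 w) := mono_of_mono_fac (sq.lift_fst k 0 w)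
  have isLimit : IsLimit (KernelFork.ofι (sq.lift k 0 w) (sq.lift_snd k 0 w)) :=
    KernelFork.IsLimit.ofι' _ _ fun g hg =>
      let ⟨m, hm⟩ := KernelFork.IsLimit.lift' (E.isKernel h).some (g ≫ f') (by
        rw [Category.assoc, sq.w, reassoc_of% hg, zero_comp])
      ⟨m, sq.hom_ext (by simpa using hm) (by simp [hg])⟩
  exact ⟨P, f', p', sq.lift k 0 w, sq, hl.of_isLimit isLimit, sq.lift_fst k 0 w⟩

theorem exists_isPushout (h : E.conflation i d) {A' : 𝒜} (f : A ⟶ A') :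
    ∃ (P : 𝒜) (f' : B ⟶ P) (i' : A' ⟶ P) (d' : P ⟶ Z),
      IsPushout i f f' i' ∧ E.conflation i' d' ∧ f' ≫ d' = d := by
  obtain ⟨P, f', i', Q, q, sq, hq⟩ := E.pushout_inflation h f
  have w : i ≫ d = f ≫ 0 := by rw [E.comp_zero h, Limits.comp_zero]
  have : Epi d := h.epi
  have : Epi (sq.desc d 0 w) := epi_of_epi_fac (sq.inl_desc d 0 w)
  have isColimit : IsColimit (CokernelCofork.ofπ (sq.desc d 0 w) (sq.inr_desc d 0 w)) :=
    CokernelCofork.IsColimit.ofπ' _ _ fun g hg =>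
      let ⟨m, hm⟩ := CokernelCofork.IsColimit.desc' (E.isCokernel h).some (f' ≫ g) (by
        rw [sq.w_assoc, hg, Limits.comp_zero])
      ⟨m, sq.hom_ext (by simpa using hm) (by simp [hg])⟩
  exact ⟨P, f', i', sq.desc d 0 w, sq, hq.of_isColimit isColimit, sq.inl_desc d 0 w⟩

theorem exists_splitting (h : E.conflation i d) (r : B ⟶ A) (hr : i ≫ r = 𝟙 A) :
    ∃ σ : (ShortComplex.mk i d (E.comp_zero h)).Splitting, σ.r = r := by
  have : Epi d := h.epi
  obtain ⟨s, hs⟩ := h.exists_desc (𝟙 B - r ≫ i) (by simp [reassoc_of% hr])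
  have hsd : s ≫ d = 𝟙 Z := by
    rw [← cancel_epi d, reassoc_of% hs]
    simp [E.comp_zero h]
  exact ⟨{ r, s, f_r := hr, s_g := hsd, id := by simp [hs] }, rfl⟩

theorem exists_extension (h : E.conflation i d) (hZK : Ext1IsZero E Z K) (f : A ⟶ K) :
    ∃ g : B ⟶ K, i ≫ g = f := by
  obtain ⟨P, f', i', d', sq, h', -⟩ := h.exists_isPushout f
  obtain ⟨r, hr⟩ := hZK i' d' h'
  exact ⟨f' ≫ r, by rw [sq.w_assoc, hr, Category.comp_id]⟩

theorem exists_section_extending {k : K ⟶ M} {p : M ⟶ B} (hp : E.conflation k p)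
    (h : E.conflation i d) (hZK : Ext1IsZero E Z K) (a : A ⟶ M) (ha : a ≫ p = i) :
    ∃ s : B ⟶ M, i ≫ s = a ∧ s ≫ p = 𝟙 B := by
  have : Mono i := h.mono
  have : Epi p := hp.epi
  -- The kernel `L` of `M ⟶ B ⟶ Z` contains `A` and `K`, and `A` is a complement of `K` in `L`.
  obtain ⟨L, l, hl⟩ := E.deflation_comp hp h
  obtain ⟨m, hm⟩ := h.exists_lift (l ≫ p) (by rw [Category.assoc, E.comp_zero hl])
  obtain ⟨ρ, hρ⟩ := hp.exists_lift (l - m ≫ a) (by simp [ha, hm])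
  obtain ⟨θ, hθ⟩ := hl.exists_extension hZK ρ
  have comp_θ {T : 𝒜} (x : T ⟶ M) (y : T ⟶ A) (hxy : x ≫ p = y ≫ i) :
      x ≫ θ ≫ k = x - y ≫ a := by
    obtain ⟨x', rfl⟩ := hl.exists_lift x (by rw [reassoc_of% hxy, E.comp_zero h, Limits.comp_zero])
    have hy : x' ≫ m = y := by rw [← cancel_mono i, Category.assoc, hm, ← hxy, Category.assoc]
    rw [Category.assoc, reassoc_of% hθ, hρ, Preadditive.comp_sub, reassoc_of% hy]
  obtain ⟨s, hs⟩ := hp.exists_desc (𝟙 M - θ ≫ k) (by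
    simp [comp_θ k 0 (by simp [E.comp_zero hp])])
  refine ⟨s, ?_, ?_⟩
  · rw [← ha, Category.assoc, hs]
    simp [comp_θ a (𝟙 A) (by simp [ha])]
  · rw [← cancel_epi p, reassoc_of% hs]
    simp [E.comp_zero hp]

theorem hasLiftingProperty (h : E.conflation i d) (hp : E.conflation k p)
    (hZK : Ext1IsZero E Z K) : HasLiftingProperty i p where
  sq_hasLift {a b} sq := by
    obtain ⟨P, b', p', k', hP, hp', -⟩ := hp.exists_isPullback b
    obtain ⟨s, his, hsp⟩ :=
      hp'.exists_section_extending h hZK (hP.lift a i sq.w) (hP.lift_snd a i sq.w)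
    exact ⟨⟨{ l := s ≫ b'
              fac_left := by rw [reassoc_of% his, hP.lift_fst]
              fac_right := by rw [Category.assoc, hP.w, reassoc_of% hsp] }⟩⟩

end conflation

/-- The right `Ext¹`-orthogonal class `X^⊥` of a class of objects `X`, that is, the only possible
right-hand class of a cotorsion pair `(X, Y)`. -/
def rightOrthogonal (E : ExactStructure 𝒜) (X : Set 𝒜) : Set 𝒜 :=
  {B | ∀ A ∈ X, Ext1IsZero E A B}

variable {X : Set 𝒜}

theorem coFibO_le_llp_tFibO_rightOrthogonal :
    CoFibO E X ≤ (TFibO E (E.rightOrthogonal X)).llp := by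
  rintro _ _ i ⟨Z, d, hi, hZ⟩ _ _ p ⟨K, k, hp, hK⟩
  exact hi.hasLiftingProperty hp (hK Z hZ)

theorem mem_rightOrthogonal_of_retract {B C : 𝒜} (e : Retract B C) (hC : C ∈ E.rightOrthogonal X) :
    B ∈ E.rightOrthogonal X := by
  intro A hA M i d h
  obtain ⟨g, hg⟩ := h.exists_extension (hC A hA) e.i
  exact ⟨g ≫ e.r, by rw [reassoc_of% hg, e.retract]⟩

theorem mem_rightOrthogonal_of_conflation (h : E.conflation k p) (hK : K ∈ E.rightOrthogonal X)
    (hN : N ∈ E.rightOrthogonal X) : M ∈ E.rightOrthogonal X := by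
  intro A hA T i d hi
  obtain ⟨g, hg⟩ := hi.exists_extension (hN A hA) p
  have : HasLiftingProperty i p := hi.hasLiftingProperty h (hK A hA)
  have sq : CommSq (𝟙 M) i p g := ⟨by rw [hg, Category.id_comp]⟩
  exact ⟨sq.lift, sq.fac_left⟩

end ExactStructure

theorem stmt_13_general (E : ExactStructure 𝒜) (X : Set 𝒜) {A M B : 𝒜} (i : A ⟶ M) (p : M ⟶ B)
    (hi : CoFibO E X i) (hp : TFibO E (E.rightOrthogonal X) p)
    (hip : WeqO E (E.rightOrthogonal X) (E.rightOrthogonal X) (i ≫ p)) :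
    TCoFibO E (X ∩ E.rightOrthogonal X) i := by
  obtain ⟨W, hW, t, hdesc⟩ := hip
  have := ExactStructure.coFibO_le_llp_tFibO_rightOrthogonal i hi (biprod.desc (i ≫ p) t) hdesc
  have sq : CommSq biprod.inl i (biprod.desc (i ≫ p) t) p := ⟨biprod.inl_desc _ _⟩
  obtain ⟨r, hir, hrp⟩ : ∃ r : M ⟶ A ⊞ W, i ≫ r = biprod.inl ∧ r ≫ biprod.desc (i ≫ p) t = p :=
    ⟨sq.lift, sq.fac_left, sq.fac_right⟩
  have hretraction : i ≫ r ≫ biprod.fst = 𝟙 A := by rw [reassoc_of% hir, biprod.inl_fst]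
  obtain ⟨Z, d, hd, hZ⟩ := hi
  obtain ⟨σ, hσ⟩ := hd.exists_splitting _ hretraction
  have hfst : σ.s ≫ r ≫ biprod.fst = 0 := hσ ▸ σ.s_r
  have hsection : σ.s ≫ p = (σ.s ≫ r ≫ biprod.snd) ≫ t := by
    conv_lhs => rw [← hrp, biprod.desc_eq]
    simp [reassoc_of% hfst]
  obtain ⟨K, k, hk, hK⟩ := hp
  obtain ⟨P, t', p', k', hP, hk', -⟩ := hk.exists_isPullback t
  have retract : Retract Z P :=
    { i := hP.lift _ _ hsection
      r := t' ≫ d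
      retract := by rw [hP.lift_fst_assoc]; exact σ.s_g }
  exact ⟨⟨_, hretraction⟩, Z, d, hd, hZ, ExactStructure.mem_rightOrthogonal_of_retract retract
    (ExactStructure.mem_rightOrthogonal_of_conflation hk' hK hW)⟩

/-- If `α = p ∘ i ∈ Weq_ω` with `i ∈ CoFib_ω` and `p ∈ TFib_ω`, then
`i ∈ TCoFib_ω`. -/
theorem stmt_13 (E : ExactStructure 𝒜) (hwic : IsWIC E) (X Y : Set 𝒜)
    (hcp : IsCotorsionPair E X Y) (hcomp : IsCompleteCP E X Y)
    (hher : IsHereditaryCP E X Y)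
    {A M B : 𝒜} (i : A ⟶ M) (p : M ⟶ B)
    (hi : CoFibO E X i) (hp : TFibO E Y p) (hip : WeqO E (X ∩ Y) Y (i ≫ p)) :
    TCoFibO E (X ∩ Y) i := by
  obtain rfl : Y = E.rightOrthogonal X := Set.ext hcp.2
  exact stmt_13_general E X i p hi hp (let ⟨W, hW, h⟩ := hip; ⟨W, hW.2, h⟩)
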